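/- arXiv:1806.11000 — 3 statements merged into one kernel-verified Lean document; each statement's English description precedes it below -/
import Mathlib

section
/- Let ε, γ, h, C_inv > 0 be real numbers and let a, b ≥ 0 be real numbers satisfying the inverse estimate h·a ≤ C_inv·b. Set ℏ := min(ε^{-1/2}·h, γ^{-1/2}), and define C := 1 if ε^{-1/2}·h ≤ γ^{-1/2} and C := C_inv otherwise. Then (h/ℏ)·a ≤ C·√(ε·a² + γ·b²). -/
/-- Scalar content of Lemma 3.3: robust inverse estimate in the energy norm. -/
theorem stmt_0 (ε γ h C_inv a b : ℝ)
    (hε : 0 < ε) (hγ : 0 < γ) (hh : 0 < h) (hC : 0 < C_inv)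
    (ha : 0 ≤ a) (hb : 0 ≤ b)
    (hinv : h * a ≤ C_inv * b) :
    (h / min (h / Real.sqrt ε) (1 / Real.sqrt γ)) * a ≤
      (if h / Real.sqrt ε ≤ 1 / Real.sqrt γ then 1 else C_inv) *
        Real.sqrt (ε * a ^ 2 + γ * b ^ 2) := by
  -- Each of the two terms of the energy norm is bounded by the whole.
  have h_grad : √ε * a ≤ √(ε * a ^ 2 + γ * b ^ 2) := by
    apply Real.le_sqrt_of_sq_le
    rw [mul_pow, Real.sq_sqrt hε.le]
    exact le_add_of_nonneg_right (by positivity)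
  have h_mass : √γ * b ≤ √(ε * a ^ 2 + γ * b ^ 2) := by
    apply Real.le_sqrt_of_sq_le
    rw [mul_pow, Real.sq_sqrt hγ.le]
    exact le_add_of_nonneg_left (by positivity)
  split_ifs with hcase
  · -- The prefactor is `√ε`, so the gradient term suffices.
    rw [min_eq_left hcase, div_div_cancel₀ hh.ne', one_mul]
    exact h_grad
  · -- The prefactor is `h * √γ`, and the inverse estimate trades `h * a` for `b`.
    rw [min_eq_right (not_le.1 hcase).le, div_div_eq_mul_div, div_one]
    calc h * √γ * a = √γ * (h * a) := by ring
      _ ≤ √γ * (C_inv * b) := by gcongr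
      _ = C_inv * (√γ * b) := by ring
      _ ≤ C_inv * √(ε * a ^ 2 + γ * b ^ 2) := by gcongr
end

section
/- Let 0 < θ ≤ 1 and 0 ≤ δ < √θ be real numbers, and let η, η⋆, μ, μ⋆ ≥ 0 be real numbers satisfying η⋆ ≤ (1 + δ)·η, μ ≤ μ⋆ + δ·η, and θ·η² ≤ μ². Then ((√θ − δ)/(1 + δ))²·(η⋆)² ≤ (μ⋆)². -/
/-!
Everything is nonnegative, so the squares can be removed: the marking criterion reads `√θ * η ≤ μ`,
and the perturbation bound on `μ` turns it into `(√θ - δ) * η ≤ μstar`. Since `√θ - δ` is positive,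
`η` may be bounded below by `ηstar / (1 + δ)`, and squaring gives the claim.
-/

/-- Dörfler-marking transfer argument in the proof of Theorem 4.3. -/
theorem stmt_11 (θ δ η ηstar μ μstar : ℝ)
    (hθ0 : 0 < θ) (hθ1 : θ ≤ 1) (hδ0 : 0 ≤ δ) (hδθ : δ < Real.sqrt θ)
    (hη : 0 ≤ η) (hηstar : 0 ≤ ηstar) (hμ : 0 ≤ μ) (hμstar : 0 ≤ μstar)
    (h1 : ηstar ≤ (1 + δ) * η) (h2 : μ ≤ μstar + δ * η)
    (hmark : θ * η ^ 2 ≤ μ ^ 2) :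
    ((Real.sqrt θ - δ) / (1 + δ)) ^ 2 * ηstar ^ 2 ≤ μstar ^ 2 := by
  have hroot : Real.sqrt θ * η ≤ μ := by
    refine (sq_le_sq₀ (by positivity) hμ).mp ?_
    rw [mul_pow, Real.sq_sqrt hθ0.le]
    exact hmark
  have hd : 0 < 1 + δ := by linarith
  have hq : 0 ≤ (Real.sqrt θ - δ) / (1 + δ) := div_nonneg (by linarith) hd.le
  have key : (Real.sqrt θ - δ) / (1 + δ) * ηstar ≤ μstar :=
    calc (Real.sqrt θ - δ) / (1 + δ) * ηstar
        ≤ (Real.sqrt θ - δ) / (1 + δ) * ((1 + δ) * η) :=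
          mul_le_mul_of_nonneg_left h1 hq
      _ = (Real.sqrt θ - δ) * η := by field_simp
      _ ≤ μstar := by linarith
  rw [← mul_pow]
  exact pow_le_pow_left₀ (mul_nonneg hq hηstar) key 2
end

section
/- Let s > 0, 0 < q < 1, C_lin > 0, A ≥ 0, C_cls ≥ 0, C₀ ≥ 0 be real numbers and ℓ₀ ∈ ℕ. Let η : ℕ → ℝ with η_j > 0 for all j, M : ℕ → ℝ with M_j ≥ 0 for all j, and N : ℕ → ℝ with N_ℓ ≥ 0 for all ℓ. Assume: (i) η_ℓ ≤ C_lin·q^{ℓ−j}·η_j for all ℓ₀ ≤ j ≤ ℓ; (ii) M_j ≤ A·η_j^{−1/s} for all j ≥ ℓ₀; (iii) N_ℓ ≤ C_cls·Σ_{j=0}^{ℓ−1} M_j for all ℓ; (iv) Σ_{j=0}^{ℓ₀−1} M_j ≤ C₀·Σ_{j=ℓ₀}^{ℓ−1} M_j for all ℓ > ℓ₀. Then for all ℓ > ℓ₀ it holds that N_ℓ^s·η_ℓ ≤ (C_cls·(1 + C₀)·A·C_lin^{1/s}·q^{1/s}/(1 − q^{1/s}))^s. -/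
/-!
Linear convergence, raised to the power `1 / s`, says that `η j ^ (-(1 / s))` is at most
`C_lin ^ (1 / s) * r ^ (ℓ - j) * η ℓ ^ (-(1 / s))` with `r = q ^ (1 / s) < 1`. The bounds on the
numbers `M j` of marked elements with `ℓ₀ ≤ j < ℓ` are therefore dominated by a geometric series
read backwards from `ℓ`, whose sum is at most `r / (1 - r)` (`sum_pow_sub_le`). Mesh closure and the
control of the marking before `ℓ₀` turn this into a bound on `N ℓ * η ℓ ^ (1 / s)`, and taking the
`s`-th power gives the rate.
-/

theorem sum_pow_sub_le {r : ℝ} (h0 : 0 ≤ r) (h1 : r < 1) (m n : ℕ) (hmn : m ≤ n) :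
    ∑ j ∈ Finset.Ico m n, r ^ (n - j) ≤ r / (1 - r) := by
  have h1' : 0 < 1 - r := by linarith
  induction n, hmn using Nat.le_induction with
  | base => simpa using div_nonneg h0 h1'.le
  | succ n hmn ih =>
    have hstep : ∑ j ∈ Finset.Ico m n, r ^ (n + 1 - j) = r * ∑ j ∈ Finset.Ico m n, r ^ (n - j) := by
      rw [Finset.mul_sum]
      refine Finset.sum_congr rfl fun j hj => ?_
      rw [Nat.succ_sub (Finset.mem_Ico.mp hj).2.le, pow_succ']
    rw [Finset.sum_Ico_succ_top hmn, hstep, Nat.add_sub_cancel_left, pow_one]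
    calc r * ∑ j ∈ Finset.Ico m n, r ^ (n - j) + r ≤ r * (r / (1 - r)) + r := by gcongr
      _ = r / (1 - r) := by field_simp; ring


/-- Counting argument proving optimal convergence rates (Theorem 4.6). -/
theorem stmt_12 (s q C_lin A C_cls C₀ : ℝ) (ℓ₀ : ℕ)
    (hs : 0 < s) (hq0 : 0 < q) (hq1 : q < 1) (hClin : 0 < C_lin)
    (hA : 0 ≤ A) (hCcls : 0 ≤ C_cls) (hC₀ : 0 ≤ C₀)
    (η M N : ℕ → ℝ)
    (hηpos : ∀ j, 0 < η j) (hMpos : ∀ j, 0 ≤ M j) (hNpos : ∀ ℓ, 0 ≤ N ℓ)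
    (hlin : ∀ j ℓ : ℕ, ℓ₀ ≤ j → j ≤ ℓ → η ℓ ≤ C_lin * q ^ (ℓ - j) * η j)
    (hmark : ∀ j : ℕ, ℓ₀ ≤ j → M j ≤ A * η j ^ (-(1 / s)))
    (hcls : ∀ ℓ : ℕ, N ℓ ≤ C_cls * ∑ j ∈ Finset.range ℓ, M j)
    (hinit : ∀ ℓ : ℕ, ℓ₀ < ℓ →
      ∑ j ∈ Finset.range ℓ₀, M j ≤ C₀ * ∑ j ∈ Finset.Ico ℓ₀ ℓ, M j) :
    ∀ ℓ : ℕ, ℓ₀ < ℓ →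
      N ℓ ^ s * η ℓ ≤
        (C_cls * (1 + C₀) * A * C_lin ^ (1 / s) * q ^ (1 / s) / (1 - q ^ (1 / s))) ^ s := by
  intro ℓ hℓ
  set r := q ^ (1 / s) with hr
  set c := C_lin ^ (1 / s) with hc
  set e := η ℓ ^ (1 / s) with he
  have hs' : 0 < 1 / s := by positivity
  have hr0 : 0 ≤ r := Real.rpow_nonneg hq0.le _
  have hr1 : r < 1 := Real.rpow_lt_one hq0.le hq1 hs'
  have hc0 : 0 ≤ c := Real.rpow_nonneg hClin.le _
  have he0 : 0 ≤ e := Real.rpow_nonneg (hηpos ℓ).le _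
  have hterm : ∀ j ∈ Finset.Ico ℓ₀ ℓ, M j * e ≤ A * c * r ^ (ℓ - j) := by
    intro j hj
    obtain ⟨hj1, hj2⟩ := Finset.mem_Ico.mp hj
    have hηj : 0 < η j ^ (1 / s) := Real.rpow_pos_of_pos (hηpos j) _
    have hroot : e ≤ c * r ^ (ℓ - j) * η j ^ (1 / s) := by
      have h := Real.rpow_le_rpow (hηpos ℓ).le (hlin j ℓ hj1 hj2.le) hs'.le
      rwa [Real.mul_rpow (by positivity) (hηpos j).le, Real.mul_rpow hClin.le (by positivity),
        ← Real.rpow_pow_comm hq0.le] at h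
    calc M j * e ≤ A * η j ^ (-(1 / s)) * (c * r ^ (ℓ - j) * η j ^ (1 / s)) :=
          mul_le_mul (hmark j hj1) hroot he0
            (mul_nonneg hA (Real.rpow_nonneg (hηpos j).le _))
      _ = A * c * r ^ (ℓ - j) := by
          rw [Real.rpow_neg (hηpos j).le]
          field_simp
  have hsum : (∑ j ∈ Finset.Ico ℓ₀ ℓ, M j) * e ≤ A * c * (r / (1 - r)) := by
    rw [Finset.sum_mul]
    refine (Finset.sum_le_sum hterm).trans ?_
    rw [← Finset.mul_sum]
    exact mul_le_mul_of_nonneg_left (sum_pow_sub_le hr0 hr1 ℓ₀ ℓ hℓ.le) (mul_nonneg hA hc0)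
  have htot : ∑ j ∈ Finset.range ℓ, M j ≤ (1 + C₀) * ∑ j ∈ Finset.Ico ℓ₀ ℓ, M j := by
    rw [← Finset.sum_range_add_sum_Ico M hℓ.le]
    linarith [hinit ℓ hℓ]
  have hmain : N ℓ * e ≤ C_cls * (1 + C₀) * A * c * r / (1 - r) :=
    calc N ℓ * e ≤ C_cls * ((1 + C₀) * ∑ j ∈ Finset.Ico ℓ₀ ℓ, M j) * e := by
          gcongr
          exact (hcls ℓ).trans (by gcongr)
      _ = C_cls * (1 + C₀) * ((∑ j ∈ Finset.Ico ℓ₀ ℓ, M j) * e) := by ring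
      _ ≤ C_cls * (1 + C₀) * (A * c * (r / (1 - r))) := by gcongr
      _ = C_cls * (1 + C₀) * A * c * r / (1 - r) := by ring
  have hpow : e ^ s = η ℓ := by
    rw [he, ← Real.rpow_mul (hηpos ℓ).le, one_div_mul_cancel hs.ne', Real.rpow_one]
  calc N ℓ ^ s * η ℓ = (N ℓ * e) ^ s := by rw [Real.mul_rpow (hNpos ℓ) he0, hpow]
    _ ≤ _ := Real.rpow_le_rpow (mul_nonneg (hNpos ℓ) he0) hmain hs.le
end
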